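/- Let C be an arbitrary set of corner minors of M, and let U = (a_{ij}) and V' = (b_{ij}) be families of nonnegative integers indexed by the variables in V(C). Suppose that (1) for every W ∈ 𝒲 with W ≠ ∅ one has Σ_{x_{ij} ∈ W} a_{ij} ≥ 2 and Σ_{x_{ij} ∈ W} b_{ij} ≥ 2, and (2) U and V' have the same row sums and the same column sums, and there is a cycle σ in G(C) such that every nonzero entry of U and of V' occurs at a position x_{ij} = H_a ∩ V_b with h_a and v_b vertices of σ. Then the binomial ∏_{x_{ij} ∈ V(C)} x_{ij}^{a_{ij}} − ∏_{x_{ij} ∈ V(C)} x_{ij}^{b_{ij}} belongs to I(C); equivalently, the contingency tables U and V' are connected by the moves corresponding to the minors of C. -/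

import Mathlib

open MvPolynomial

/-- A 2-minor `[a₁,a₂|b₁,b₂]` (with `a₁ < a₂`, `b₁ < b₂`) of the `m × n` matrix
of indeterminates `M = (x_{ij})`. -/
structure Minor2 (m n : ℕ) where
  a1 : Fin m
  a2 : Fin m
  b1 : Fin n
  b2 : Fin n
  ha : a1 < a2
  hb : b1 < b2

namespace Minor2

variable {m n : ℕ}

/-- The vertex set of a 2-minor. -/
def vertexSet (δ : Minor2 m n) : Set (Fin m × Fin n) :=
  {(δ.a1, δ.b1), (δ.a1, δ.b2), (δ.a2, δ.b1), (δ.a2, δ.b2)}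

/-- `{p,q}` is one of the two vertical edges of the minor `δ`. -/
def VertEdge (δ : Minor2 m n) (p q : Fin m × Fin n) : Prop :=
  ({p, q} : Set (Fin m × Fin n)) = {(δ.a1, δ.b1), (δ.a2, δ.b1)} ∨
  ({p, q} : Set (Fin m × Fin n)) = {(δ.a1, δ.b2), (δ.a2, δ.b2)}

/-- `{p,q}` is one of the two horizontal edges of the minor `δ`. -/
def HorizEdge (δ : Minor2 m n) (p q : Fin m × Fin n) : Prop :=
  ({p, q} : Set (Fin m × Fin n)) = {(δ.a1, δ.b1), (δ.a1, δ.b2)} ∨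
  ({p, q} : Set (Fin m × Fin n)) = {(δ.a2, δ.b1), (δ.a2, δ.b2)}

/-- `{p,q}` is an edge (vertical or horizontal) of the minor `δ`. -/
def IsEdge (δ : Minor2 m n) (p q : Fin m × Fin n) : Prop :=
  δ.VertEdge p q ∨ δ.HorizEdge p q

/-- The binomial `f_δ = x_{a₁b₁}x_{a₂b₂} − x_{a₁b₂}x_{a₂b₁}` of the 2-minor `δ`. -/
noncomputable def binom (K : Type*) [Field K] (δ : Minor2 m n) : MvPolynomial (Fin m × Fin n) K :=
  X (δ.a1, δ.b1) * X (δ.a2, δ.b2) - X (δ.a1, δ.b2) * X (δ.a2, δ.b1)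

end Minor2

/-- The vertex set `V(C)` of a collection `C` of 2-minors. -/
def vertexSetOf {m n : ℕ} (C : Set (Minor2 m n)) : Set (Fin m × Fin n) :=
  ⋃ δ ∈ C, δ.vertexSet

/-- The binomial ideal `I(C)` generated by the binomials of the minors in `C`. -/
noncomputable def minorIdeal (K : Type*) [Field K] {m n : ℕ} (C : Set (Minor2 m n)) :
    Ideal (MvPolynomial (Fin m × Fin n) K) :=
  Ideal.span {f | ∃ δ ∈ C, f = Minor2.binom K δ}

/-- Two positions are joined by a vertical edge of some minor of `C`. -/
def vertAdj {m n : ℕ} (C : Set (Minor2 m n)) (p q : Fin m × Fin n) : Prop :=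
  ∃ δ ∈ C, δ.VertEdge p q

/-- Two positions are joined by a horizontal edge of some minor of `C`. -/
def horizAdj {m n : ℕ} (C : Set (Minor2 m n)) (p q : Fin m × Fin n) : Prop :=
  ∃ δ ∈ C, δ.HorizEdge p q

/-- The maximal vertical interval of `C` containing a position, encoded as the class of the
position under connectivity by vertical edges of minors of `C`. -/
def vClass {m n : ℕ} (C : Set (Minor2 m n)) (p : Fin m × Fin n) : Quot (vertAdj C) :=
  Quot.mk _ p

/-- The maximal horizontal interval of `C` containing a position. -/
def hClass {m n : ℕ} (C : Set (Minor2 m n)) (p : Fin m × Fin n) : Quot (horizAdj C) :=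
  Quot.mk _ p

/-- The monomial map `φ` with `φ(x_{ab}) = h_i v_j`, where `H_i` and `V_j` are the maximal
horizontal and vertical intervals of `C` containing `x_{ab}` (variables not appearing in any
minor of `C` are sent to products of fresh variables, so that the kernel of `φ` is the
extension to `S` of the toric ideal `J_C ⊆ S_C`). -/
noncomputable def phiC (K : Type*) [Field K] {m n : ℕ} (C : Set (Minor2 m n)) :
    MvPolynomial (Fin m × Fin n) K →ₐ[K]
      MvPolynomial (Quot (horizAdj C) ⊕ Quot (vertAdj C)) K :=
  aeval fun p => X (Sum.inl (hClass C p)) * X (Sum.inr (vClass C p))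

/-- The toric ideal `J_C = ker φ`. -/
noncomputable def toricIdeal (K : Type*) [Field K] {m n : ℕ} (C : Set (Minor2 m n)) :
    Ideal (MvPolynomial (Fin m × Fin n) K) :=
  RingHom.ker (phiC K C)

/-- A subset `W ⊆ V(C)` is admissible if for every `δ ∈ C` either `W ∩ V(δ) = ∅`
or `W` contains an edge of `δ`. -/
def Admissible {m n : ℕ} (C : Set (Minor2 m n)) (W : Set (Fin m × Fin n)) : Prop :=
  W ⊆ vertexSetOf C ∧
    ∀ δ ∈ C, W ∩ δ.vertexSet = ∅ ∨ ∃ p q, p ∈ W ∧ q ∈ W ∧ δ.IsEdge p q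

/-- `C' = {δ ∈ C : V(δ) ∩ W = ∅}`. -/
def minorsAvoiding {m n : ℕ} (C : Set (Minor2 m n)) (W : Set (Fin m × Fin n)) :
    Set (Minor2 m n) :=
  {δ ∈ C | δ.vertexSet ∩ W = ∅}

/-- The ideal generated by the variables with index in `W`. -/
noncomputable def varIdeal (K : Type*) [Field K] {m n : ℕ} (W : Set (Fin m × Fin n)) :
    Ideal (MvPolynomial (Fin m × Fin n) K) :=
  Ideal.span ((fun p => (X p : MvPolynomial (Fin m × Fin n) K)) '' W)

/-- The prime ideal `P_W(C) = (x_{ij} : x_{ij} ∈ W) + J_{C'}`,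
where `C' = {δ ∈ C : V(δ) ∩ W = ∅}`. -/
noncomputable def PW (K : Type*) [Field K] {m n : ℕ} (C : Set (Minor2 m n))
    (W : Set (Fin m × Fin n)) : Ideal (MvPolynomial (Fin m × Fin n) K) :=
  varIdeal K W + toricIdeal K (minorsAvoiding C W)

/-- A cycle `σ : h_{i₁}, v_{j₁}, h_{i₂}, v_{j₂}, …, h_{i_r}, v_{j_r}` (`r ≥ 2`) of the
bipartite graph `G(C)`, recorded by the intersection vertices
`p k = H_{i_k} ∩ V_{j_k}` and `q k = H_{i_{k+1}} ∩ V_{j_k}` (indices cyclic, `r = len + 2`). -/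
structure CycleIn {m n : ℕ} (C : Set (Minor2 m n)) where
  len : ℕ
  p : Fin (len + 2) → Fin m × Fin n
  q : Fin (len + 2) → Fin m × Fin n
  p_mem : ∀ k, p k ∈ vertexSetOf C
  q_mem : ∀ k, q k ∈ vertexSetOf C
  shareV : ∀ k, vClass C (p k) = vClass C (q k)
  shareH : ∀ k, hClass C (q k) = hClass C (p (k + 1))
  injH : Function.Injective fun k => hClass C (p k)
  injV : Function.Injective fun k => vClass C (p k)

/-- The binomial `f_σ` associated to a cycle `σ` of `G(C)`. -/
noncomputable def cycleBinom (K : Type*) [Field K] {m n : ℕ} {C : Set (Minor2 m n)}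
    (σ : CycleIn C) : MvPolynomial (Fin m × Fin n) K :=
  (∏ k, X (σ.p k)) - (∏ k, X (σ.q k))

section Alg

variable (K : Type*) [Field K] {m n : ℕ}

theorem varIdeal_eq_ker (Z : Set (Fin m × Fin n)) [DecidablePred (· ∈ Z)] :
    varIdeal K Z = RingHom.ker (aeval (R := K)
      (fun p : Fin m × Fin n => if p ∈ Z then (0 : MvPolynomial (Fin m × Fin n) K) else X p)) := by
  apply le_antisymm
  · unfold varIdeal
    rw [Ideal.span_le]
    rintro _ ⟨p, hp, rfl⟩
    simp [RingHom.mem_ker, hp]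
  · intro f hf
    have key : ∀ f : MvPolynomial (Fin m × Fin n) K, f - aeval (R := K)
      (fun p : Fin m × Fin n => if p ∈ Z then (0 : MvPolynomial (Fin m × Fin n) K) else X p) f
        ∈ varIdeal K Z := by
      intro f
      induction f using MvPolynomial.induction_on with
      | C a => simp
      | add p q hp hq =>
        rw [map_add, add_sub_add_comm]
        exact Ideal.add_mem _ hp hq
      | mul_X f p hf =>
        rw [map_mul, aeval_X]
        by_cases hp : p ∈ Z
        · simp only [hp, if_true, mul_zero, sub_zero]
          exact Ideal.mul_mem_left _ _ (Ideal.subset_span ⟨p, hp, rfl⟩)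
        · simp only [hp, if_false]
          rw [← sub_mul]
          exact Ideal.mul_mem_right _ _ hf
    have := key f
    rw [RingHom.mem_ker] at hf
    rwa [show aeval (R := K)
      (fun p : Fin m × Fin n => if p ∈ Z then (0 : MvPolynomial (Fin m × Fin n) K) else X p) f
        = 0 from hf, sub_zero] at this

theorem varIdeal_isPrime (Z : Set (Fin m × Fin n)) : (varIdeal K Z).IsPrime := by
  classical
  rw [varIdeal_eq_ker]
  exact RingHom.ker_isPrime _

theorem eval_zero_of_mem_varIdeal (Z : Set (Fin m × Fin n)) (e : Fin m × Fin n → K)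
    (he : ∀ p ∈ Z, e p = 0) (f : MvPolynomial (Fin m × Fin n) K) (hf : f ∈ varIdeal K Z) :
    eval e f = 0 := by
  have : varIdeal K Z ≤ RingHom.ker (eval e) := by
    unfold varIdeal
    rw [Ideal.span_le]
    rintro _ ⟨p, hp, rfl⟩
    simp [RingHom.mem_ker, he p hp]
  exact this hf

theorem mem_of_X_mem_varIdeal (Z : Set (Fin m × Fin n)) (p : Fin m × Fin n)
    (hf : (X p : MvPolynomial (Fin m × Fin n) K) ∈ varIdeal K Z) : p ∈ Z := by
  classical
  by_contra hp
  have := eval_zero_of_mem_varIdeal K Z (fun q => if q = p then 1 else 0)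
    (by intro q hq; rw [if_neg]; rintro rfl; exact hp hq) _ hf
  simp at this

theorem toricIdeal_empty : toricIdeal K (∅ : Set (Minor2 m n)) = ⊥ := by
  rw [eq_bot_iff]
  intro f hf
  let l1 : Quot (horizAdj (∅ : Set (Minor2 m n))) → Fin m × Fin n :=
    Quot.lift id (by rintro a b ⟨δ, hδ, _⟩; exact hδ.elim)
  let ψ : MvPolynomial (Quot (horizAdj (∅ : Set (Minor2 m n))) ⊕
      Quot (vertAdj (∅ : Set (Minor2 m n)))) K →ₐ[K] MvPolynomial (Fin m × Fin n) K :=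
    aeval (Sum.elim (fun c => X (l1 c)) (fun _ => 1))
  have h : ψ.comp (phiC K ∅) = AlgHom.id K _ := by
    apply MvPolynomial.algHom_ext
    intro p
    simp [ψ, phiC, hClass, l1]
  have hf0 : phiC K (∅ : Set (Minor2 m n)) f = 0 := hf
  have h2 := congrArg (fun F => F f) h
  simp only [AlgHom.comp_apply, hf0, map_zero, AlgHom.id_apply] at h2
  exact h2.symm

variable [NeZero m] [NeZero n]

/-- The bipartite graph of a set of corner minors. -/
def cg (C : Set (Minor2 m n)) (a : Fin m) (b : Fin n) : Prop :=
  ∃ δ ∈ C, δ.a2 = a ∧ δ.b2 = b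

theorem binom_mem (C : Set (Minor2 m n)) (hC : ∀ δ ∈ C, δ.a1 = 0 ∧ δ.b1 = 0)
    {a : Fin m} {b : Fin n} (h : cg C a b) :
    (X (0, 0) * X (a, b) - X (0, b) * X (a, 0) : MvPolynomial (Fin m × Fin n) K)
      ∈ minorIdeal K C := by
  obtain ⟨δ, hδ, rfl, rfl⟩ := h
  refine Ideal.subset_span ⟨δ, hδ, ?_⟩
  simp [Minor2.binom, (hC δ hδ).1, (hC δ hδ).2]

theorem cg_ne (C : Set (Minor2 m n)) (hC : ∀ δ ∈ C, δ.a1 = 0 ∧ δ.b1 = 0)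
    {a : Fin m} {b : Fin n} (h : cg C a b) : a ≠ 0 ∧ b ≠ 0 := by
  obtain ⟨δ, hδ, rfl, rfl⟩ := h
  have h1 := δ.ha
  have h2 := δ.hb
  rw [(hC δ hδ).1] at h1
  rw [(hC δ hδ).2] at h2
  exact ⟨h1.ne', h2.ne'⟩

theorem exists_W (C : Set (Minor2 m n)) (hC : ∀ δ ∈ C, δ.a1 = 0 ∧ δ.b1 = 0)
    (hne : C.Nonempty) (Z : Set (Fin m × Fin n)) (h00 : (0, 0) ∈ Z)
    (hcov : ∀ a b, cg C a b → (a, 0) ∈ Z ∨ (0, b) ∈ Z)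
    (g : MvPolynomial (Fin m × Fin n) K) (hg : X (0, 0) * g ∈ minorIdeal K C)
    (hgZ : g ∉ varIdeal K Z) :
    ∃ W ⊆ Z, Admissible C W ∧ PW K C W ∈ (minorIdeal K C).minimalPrimes ∧ W ≠ ∅ := by
  have hle : ∀ Z : Set (Fin m × Fin n), (0, 0) ∈ Z →
      (∀ a b, cg C a b → (a, 0) ∈ Z ∨ (0, b) ∈ Z) → minorIdeal K C ≤ varIdeal K Z := by
    intro Z h00 hcov
    unfold minorIdeal
    rw [Ideal.span_le]
    rintro _ ⟨δ, hδ, rfl⟩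
    have hX : ∀ p ∈ Z, (X p : MvPolynomial (Fin m × Fin n) K) ∈ varIdeal K Z :=
      fun p hp => Ideal.subset_span ⟨p, hp, rfl⟩
    simp only [Minor2.binom, (hC δ hδ).1, (hC δ hδ).2]
    refine Ideal.sub_mem _ (Ideal.mul_mem_right _ _ (hX _ h00)) ?_
    rcases hcov _ _ ⟨δ, hδ, rfl, rfl⟩ with h | h
    · exact Ideal.mul_mem_left _ _ (hX _ h)
    · exact Ideal.mul_mem_right _ _ (hX _ h)
  haveI := varIdeal_isPrime K Z
  obtain ⟨Q, hQ, hQZ⟩ := Ideal.exists_minimalPrimes_le (hle Z h00 hcov)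
  have hQp : Q.IsPrime := hQ.1.1
  have hIQ : minorIdeal K C ≤ Q := hQ.1.2
  have ht : (X (0, 0) : MvPolynomial (Fin m × Fin n) K) ∈ Q := by
    rcases hQp.mem_or_mem (hIQ hg) with h | h
    · exact h
    · exact absurd (hQZ h) hgZ
  let W : Set (Fin m × Fin n) := {p | p ∈ vertexSetOf C ∧ X p ∈ Q}
  have hW0 : (0, 0) ∈ W := by
    obtain ⟨δ, hδ⟩ := hne
    refine ⟨?_, ht⟩
    simp only [vertexSetOf, Set.mem_iUnion]
    refine ⟨δ, hδ, ?_⟩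
    simp [Minor2.vertexSet, (hC δ hδ).1, (hC δ hδ).2]
  have hWcov : ∀ a b, cg C a b → (a, 0) ∈ W ∨ (0, b) ∈ W := by
    intro a b hab
    have h1 := hIQ (binom_mem K C hC hab)
    have h2 : (X (0, b) * X (a, 0) : MvPolynomial (Fin m × Fin n) K) ∈ Q := by
      have := Ideal.sub_mem _ (Ideal.mul_mem_right (X (a, b)) _ ht) h1
      simpa using this
    obtain ⟨δ, hδ, rfl, rfl⟩ := hab
    rcases hQp.mem_or_mem h2 with h | h
    · right
      refine ⟨?_, h⟩
      simp only [vertexSetOf, Set.mem_iUnion]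
      refine ⟨δ, hδ, ?_⟩
      simp [Minor2.vertexSet, (hC δ hδ).1, (hC δ hδ).2]
    · left
      refine ⟨?_, h⟩
      simp only [vertexSetOf, Set.mem_iUnion]
      refine ⟨δ, hδ, ?_⟩
      simp [Minor2.vertexSet, (hC δ hδ).1, (hC δ hδ).2]
  have hav : minorsAvoiding C W = ∅ := by
    ext δ
    simp only [minorsAvoiding, Set.mem_setOf_eq, Set.mem_empty_iff_false, iff_false, not_and]
    intro hδ h
    have : ((0, 0) : Fin m × Fin n) ∈ δ.vertexSet ∩ W := by
      refine ⟨?_, hW0⟩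
      simp [Minor2.vertexSet, (hC δ hδ).1, (hC δ hδ).2]
    rw [h] at this
    exact this
  have hPW : PW K C W = varIdeal K W := by
    unfold PW
    rw [hav, toricIdeal_empty]
    simp
  have hWQ : varIdeal K W ≤ Q := by
    unfold varIdeal
    rw [Ideal.span_le]
    rintro _ ⟨p, hp, rfl⟩
    exact hp.2
  refine ⟨W, ?_, ⟨fun p hp => hp.1, ?_⟩, ?_, ?_⟩
  · intro p hp
    exact mem_of_X_mem_varIdeal K Z p (hQZ hp.2)
  · intro δ hδ
    right
    rcases hWcov _ _ ⟨δ, hδ, rfl, rfl⟩ with h | h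
    · exact ⟨_, _, hW0, h, Or.inl (Or.inl (by rw [(hC δ hδ).1, (hC δ hδ).2]))⟩
    · exact ⟨_, _, hW0, h, Or.inr (Or.inl (by rw [(hC δ hδ).1, (hC δ hδ).2]))⟩
  · rw [hPW, le_antisymm hWQ (hQ.2 ⟨varIdeal_isPrime K W, hle W hW0 hWcov⟩ hWQ)]
    exact hQ
  · exact Set.nonempty_iff_ne_empty.1 ⟨_, hW0⟩

/-- witness in a row -/
theorem exists_W_row (C : Set (Minor2 m n)) (hC : ∀ δ ∈ C, δ.a1 = 0 ∧ δ.b1 = 0)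
    (Z : Set (Fin m × Fin n)) (h00 : (0, 0) ∈ Z)
    (hint : ∀ a b, a ≠ 0 → b ≠ 0 → (a, b) ∉ Z)
    (hcov : ∀ a b, cg C a b → (a, 0) ∈ Z ∨ (0, b) ∈ Z)
    (a : Fin m) (b d : Fin n) (hab : cg C a b) (had : cg C a d) (hbd : b ≠ d)
    (hb : (0, b) ∉ Z) :
    ∃ W ⊆ Z, Admissible C W ∧ PW K C W ∈ (minorIdeal K C).minimalPrimes ∧ W ≠ ∅ := by
  classical
  have ha0 := (cg_ne C hC hab).1
  refine exists_W K C hC ⟨_, hab.choose_spec.1⟩ Z h00 hcov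
    (X (0, b) * X (a, d) - X (0, d) * X (a, b)) ?_ ?_
  · have h1 := Ideal.mul_mem_left _ (X (0, b)) (binom_mem K C hC had)
    have h2 := Ideal.mul_mem_left _ (X (0, d)) (binom_mem K C hC hab)
    convert Ideal.sub_mem _ h1 h2 using 1
    ring
  · intro h
    have := eval_zero_of_mem_varIdeal K Z (fun q => if q = (0, b) ∨ q = (a, d) then 1 else 0)
      (by
        intro q hq
        rw [if_neg]
        rintro (rfl | rfl)
        · exact hb hq
        · exact hint _ _ ha0 (cg_ne C hC had).2 hq) _ h
    simp [hbd.symm, ha0, ha0.symm] at this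

/-- witness in a column -/
theorem exists_W_col (C : Set (Minor2 m n)) (hC : ∀ δ ∈ C, δ.a1 = 0 ∧ δ.b1 = 0)
    (Z : Set (Fin m × Fin n)) (h00 : (0, 0) ∈ Z)
    (hint : ∀ a b, a ≠ 0 → b ≠ 0 → (a, b) ∉ Z)
    (hcov : ∀ a b, cg C a b → (a, 0) ∈ Z ∨ (0, b) ∈ Z)
    (a c : Fin m) (b : Fin n) (hab : cg C a b) (hcb : cg C c b) (hac : a ≠ c)
    (hb : (a, 0) ∉ Z) :
    ∃ W ⊆ Z, Admissible C W ∧ PW K C W ∈ (minorIdeal K C).minimalPrimes ∧ W ≠ ∅ := by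
  classical
  have hb0 := (cg_ne C hC hab).2
  refine exists_W K C hC ⟨_, hab.choose_spec.1⟩ Z h00 hcov
    (X (a, 0) * X (c, b) - X (c, 0) * X (a, b)) ?_ ?_
  · have h1 := Ideal.mul_mem_left _ (X (a, 0)) (binom_mem K C hC hcb)
    have h2 := Ideal.mul_mem_left _ (X (c, 0)) (binom_mem K C hC hab)
    convert Ideal.sub_mem _ h1 h2 using 1
    ring
  · intro h
    have := eval_zero_of_mem_varIdeal K Z (fun q => if q = (a, 0) ∨ q = (c, b) then 1 else 0)
      (by
        intro q hq
        rw [if_neg]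
        rintro (rfl | rfl)
        · exact hb hq
        · exact hint _ _ (cg_ne C hC hcb).1 hb0 hq) _ h
    simp [hac.symm, hb0, hb0.symm] at this

end Alg

section Comb

variable (K : Type*) [Field K] {m n : ℕ}

/-- the monomial of a table -/
noncomputable def mon (U : Fin m × Fin n → ℕ) : MvPolynomial (Fin m × Fin n) K :=
  ∏ p : Fin m × Fin n, (X p : MvPolynomial (Fin m × Fin n) K) ^ U p

/-- two tables are connected -/
def Eqv (C : Set (Minor2 m n)) (U V : Fin m × Fin n → ℕ) : Prop :=
  mon K U - mon K V ∈ minorIdeal K C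

variable {K}

theorem Eqv.refl {C : Set (Minor2 m n)} (U : Fin m × Fin n → ℕ) : Eqv K C U U := by
  simp [Eqv]

theorem Eqv.symm {C : Set (Minor2 m n)} {U V : Fin m × Fin n → ℕ} (h : Eqv K C U V) :
    Eqv K C V U := by
  unfold Eqv at *
  rw [← neg_sub]
  exact Ideal.neg_mem_iff _ |>.2 h

theorem Eqv.trans {C : Set (Minor2 m n)} {U V W : Fin m × Fin n → ℕ} (h : Eqv K C U V)
    (h' : Eqv K C V W) : Eqv K C U W := by
  unfold Eqv at *
  have := Ideal.add_mem _ h h'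
  rwa [sub_add_sub_cancel] at this

/-- equal marginals -/
def Marg (U V : Fin m × Fin n → ℕ) : Prop :=
  (∀ i : Fin m, ∑ j : Fin n, U (i, j) = ∑ j : Fin n, V (i, j)) ∧
  (∀ j : Fin n, ∑ i : Fin m, U (i, j) = ∑ i : Fin m, V (i, j))

theorem Marg.symm {U V : Fin m × Fin n → ℕ} (h : Marg U V) : Marg V U :=
  ⟨fun i => (h.1 i).symm, fun i => (h.2 i).symm⟩

theorem Marg.trans {U V W : Fin m × Fin n → ℕ} (h : Marg U V) (h' : Marg V W) : Marg U W :=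
  ⟨fun i => (h.1 i).trans (h'.1 i), fun i => (h.2 i).trans (h'.2 i)⟩

theorem Marg.row_ex {U V : Fin m × Fin n → ℕ} (h : Marg U V) {i : Fin m} {j : Fin n}
    (hij : U (i, j) < V (i, j)) : ∃ j' ≠ j, V (i, j') < U (i, j') := by
  by_contra! hc
  have := Finset.sum_lt_sum (s := Finset.univ) (f := fun j => U (i, j)) (g := fun j => V (i, j))
    (fun k _ => by
      by_cases hk : k = j
      · subst hk; exact hij.le
      · exact hc k hk) ⟨j, Finset.mem_univ _, hij⟩
  exact this.ne (h.1 i)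

theorem Marg.col_ex {U V : Fin m × Fin n → ℕ} (h : Marg U V) {i : Fin m} {j : Fin n}
    (hij : U (i, j) < V (i, j)) : ∃ i' ≠ i, V (i', j) < U (i', j) := by
  by_contra! hc
  have := Finset.sum_lt_sum (s := Finset.univ) (f := fun i => U (i, j)) (g := fun i => V (i, j))
    (fun k _ => by
      by_cases hk : k = i
      · subst hk; exact hij.le
      · exact hc k hk) ⟨i, Finset.mem_univ _, hij⟩
  exact this.ne (h.2 j)

variable [NeZero m] [NeZero n]

/-- support condition -/
def SupC (C : Set (Minor2 m n)) (U : Fin m × Fin n → ℕ) : Prop :=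
  ∀ a b, a ≠ 0 → b ≠ 0 → U (a, b) ≠ 0 → cg C a b

/-- remove the edge `(a,b)` -/
def remE (U : Fin m × Fin n → ℕ) (a : Fin m) (b : Fin n) : Fin m × Fin n → ℕ :=
  fun p => if p = (0, 0) ∨ p = (a, b) then U p - 1 else
    if p = (0, b) ∨ p = (a, 0) then U p + 1 else U p

/-- add the edge `(a,b)` -/
def addE (U : Fin m × Fin n → ℕ) (a : Fin m) (b : Fin n) : Fin m × Fin n → ℕ :=
  fun p => if p = (0, 0) ∨ p = (a, b) then U p + 1 else
    if p = (0, b) ∨ p = (a, 0) then U p - 1 else U p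

/-- interior distance -/
def dst (U V : Fin m × Fin n → ℕ) : ℕ :=
  ∑ p : Fin m × Fin n, if p.1 ≠ 0 ∧ p.2 ≠ 0 then (U p - V p) + (V p - U p) else 0

theorem mon_two (U0 : Fin m × Fin n → ℕ) (p q : Fin m × Fin n) :
    mon K (fun r => U0 r + (if r = p then 1 else 0) + (if r = q then 1 else 0)) =
      mon K U0 * (X p * X q) := by
  unfold mon
  simp only [pow_add, Finset.prod_mul_distrib, pow_ite, pow_one, pow_zero]
  simp [mul_assoc]

theorem move_eqv (C : Set (Minor2 m n)) (hC : ∀ δ ∈ C, δ.a1 = 0 ∧ δ.b1 = 0)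
    {a : Fin m} {b : Fin n} (h : cg C a b) (U0 : Fin m × Fin n → ℕ) :
    Eqv K C (fun r => U0 r + (if r = (0, 0) then 1 else 0) + (if r = (a, b) then 1 else 0))
      (fun r => U0 r + (if r = (0, b) then 1 else 0) + (if r = (a, 0) then 1 else 0)) := by
  unfold Eqv
  rw [mon_two, mon_two, ← mul_sub]
  exact Ideal.mul_mem_left _ _ (binom_mem K C hC h)

theorem move_marg (a : Fin m) (b : Fin n) (U0 : Fin m × Fin n → ℕ) :
    Marg (fun r => U0 r + (if r = (0, 0) then 1 else 0) + (if r = (a, b) then 1 else 0))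
      (fun r => U0 r + (if r = (0, b) then 1 else 0) + (if r = (a, 0) then 1 else 0)) := by
  constructor
  · intro i
    simp only [Finset.sum_add_distrib, Prod.mk.injEq, ite_and]
    by_cases h0 : i = 0 <;> by_cases h1 : i = a <;> simp [h0, h1]
  · intro j
    simp only [Finset.sum_add_distrib, Prod.mk.injEq, and_comm, ite_and]
    by_cases h0 : j = 0 <;> by_cases h1 : j = b <;> simp [h0, h1] <;> omega

theorem rem_basic (C : Set (Minor2 m n)) (hC : ∀ δ ∈ C, δ.a1 = 0 ∧ δ.b1 = 0)
    {a : Fin m} {b : Fin n} (h : cg C a b) (U : Fin m × Fin n → ℕ) (hU : SupC C U)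
    (h0 : 1 ≤ U (0, 0)) (h1 : 1 ≤ U (a, b)) :
    Eqv K C U (remE U a b) ∧ Marg U (remE U a b) ∧ SupC C (remE U a b) := by
  obtain ⟨ha, hb⟩ := cg_ne C hC h
  let U0 : Fin m × Fin n → ℕ := fun p => if p = (0, 0) ∨ p = (a, b) then U p - 1 else U p
  have e1 : U = (fun r => U0 r + (if r = (0, 0) then 1 else 0) + (if r = (a, b) then 1 else 0)) := by
    funext p
    by_cases hp : p = (0, 0)
    · subst hp
      simp only [U0, Prod.mk.injEq, ha.symm, true_or, if_true, false_and, if_false]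
      simp; omega
    · by_cases hp' : p = (a, b)
      · subst hp'
        simp only [U0, Prod.mk.injEq, ha, or_true, if_true, false_and, if_false]
        simp; omega
      · simp [U0, hp, hp']
  have e2 : remE U a b =
      (fun r => U0 r + (if r = (0, b) then 1 else 0) + (if r = (a, 0) then 1 else 0)) := by
    funext p
    obtain ⟨i, j⟩ := p
    simp only [remE, U0, Prod.mk.injEq]
    grind
  refine ⟨?_, ?_, ?_⟩
  · rw [e2]; conv => arg 3; rw [e1]
    exact move_eqv C hC h U0
  · rw [e2]; conv => arg 1; rw [e1]
    exact move_marg a b U0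
  · intro i j hi hj hij
    by_cases hp : i = a ∧ j = b
    · rw [hp.1, hp.2]; exact h
    · apply hU i j hi hj
      have : remE U a b (i, j) = U (i, j) := by
        simp only [remE, Prod.mk.injEq]
        grind
      rwa [this] at hij

theorem add_basic (C : Set (Minor2 m n)) (hC : ∀ δ ∈ C, δ.a1 = 0 ∧ δ.b1 = 0)
    {a : Fin m} {b : Fin n} (h : cg C a b) (U : Fin m × Fin n → ℕ) (hU : SupC C U)
    (h0 : 1 ≤ U (0, b)) (h1 : 1 ≤ U (a, 0)) :
    Eqv K C U (addE U a b) ∧ Marg U (addE U a b) ∧ SupC C (addE U a b) := by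
  obtain ⟨ha, hb⟩ := cg_ne C hC h
  let U0 : Fin m × Fin n → ℕ := fun p => if p = (0, b) ∨ p = (a, 0) then U p - 1 else U p
  have e1 : U = (fun r => U0 r + (if r = (0, b) then 1 else 0) + (if r = (a, 0) then 1 else 0)) := by
    funext p
    by_cases hp : p = (0, b)
    · subst hp
      simp only [U0, Prod.mk.injEq, ha.symm, true_or, if_true, false_and, if_false]
      simp; omega
    · by_cases hp' : p = (a, 0)
      · subst hp'
        simp only [U0, Prod.mk.injEq, ha, or_true, if_true, false_and, if_false]
        simp; omega
      · simp [U0, hp, hp']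
  have e2 : addE U a b =
      (fun r => U0 r + (if r = (0, 0) then 1 else 0) + (if r = (a, b) then 1 else 0)) := by
    funext p
    obtain ⟨i, j⟩ := p
    simp only [addE, U0, Prod.mk.injEq]
    grind
  refine ⟨?_, ?_, ?_⟩
  · rw [e2]; conv => arg 3; rw [e1]
    exact (move_eqv C hC h U0).symm
  · rw [e2]; conv => arg 1; rw [e1]
    exact (move_marg a b U0).symm
  · intro i j hi hj hij
    by_cases hp : i = a ∧ j = b
    · rw [hp.1, hp.2]; exact h
    · apply hU i j hi hj
      have : addE U a b (i, j) = U (i, j) := by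
        simp only [addE, Prod.mk.injEq]
        grind
      rwa [this] at hij

theorem dst_lt {U U' V : Fin m × Fin n → ℕ} (a : Fin m) (b : Fin n) (ha : a ≠ 0) (hb : b ≠ 0)
    (h1 : ∀ i j, i ≠ 0 → j ≠ 0 → ¬ (i = a ∧ j = b) → U' (i, j) = U (i, j))
    (h2 : (U' (a, b) - V (a, b)) + (V (a, b) - U' (a, b)) <
      (U (a, b) - V (a, b)) + (V (a, b) - U (a, b))) :
    dst U' V < dst U V := by
  unfold dst
  apply Finset.sum_lt_sum
  · rintro ⟨i, j⟩ _
    by_cases hij : i ≠ 0 ∧ j ≠ 0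
    · simp only [hij, ne_eq, not_false_eq_true, and_self, if_true]
      by_cases hp : i = a ∧ j = b
      · rw [hp.1, hp.2]; exact h2.le
      · rw [h1 i j hij.1 hij.2 hp]
    · rw [if_neg hij, if_neg hij]
  · refine ⟨(a, b), Finset.mem_univ _, ?_⟩
    simpa [ha, hb] using h2

theorem dst_rem {U V : Fin m × Fin n → ℕ} (a : Fin m) (b : Fin n) (ha : a ≠ 0) (hb : b ≠ 0)
    (h : V (a, b) < U (a, b)) : dst (remE U a b) V < dst U V := by
  apply dst_lt a b ha hb
  · intro i j hi hj hij
    simp only [remE, Prod.mk.injEq]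
    grind
  · simp [remE]; omega

theorem dst_add {U V : Fin m × Fin n → ℕ} (a : Fin m) (b : Fin n) (ha : a ≠ 0) (hb : b ≠ 0)
    (h : U (a, b) < V (a, b)) : dst (addE U a b) V < dst U V := by
  apply dst_lt a b ha hb
  · intro i j hi hj hij
    simp only [addE, Prod.mk.injEq]
    grind
  · simp [addE]; omega

/-- Interior-equal tables with equal marginals agree. -/
theorem eq_of_interior {U V : Fin m × Fin n → ℕ} (hM : Marg U V)
    (h : ∀ i j, i ≠ 0 → j ≠ 0 → U (i, j) = V (i, j)) : U = V := by
  have hcol : ∀ i, i ≠ 0 → U (i, 0) = V (i, 0) := by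
    intro i hi
    rcases lt_trichotomy (U (i, 0)) (V (i, 0)) with hlt | heq | hlt
    · obtain ⟨j, hj, hh⟩ := hM.row_ex hlt
      exact absurd (h i j hi hj) hh.ne'
    · exact heq
    · obtain ⟨j, hj, hh⟩ := hM.symm.row_ex hlt
      exact absurd (h i j hi hj) hh.ne
  have hall : ∀ i j, i ≠ 0 → U (i, j) = V (i, j) := by
    intro i j hi
    by_cases hj : j = 0
    · subst hj; exact hcol i hi
    · exact h i j hi hj
  funext ⟨i, j⟩
  by_cases hi : i = 0
  · subst hi
    rcases lt_trichotomy (U (0, j)) (V (0, j)) with hlt | heq | hlt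
    · obtain ⟨i, hi, hh⟩ := hM.col_ex hlt
      exact absurd (hall i j hi) hh.ne'
    · exact heq
    · obtain ⟨i, hi, hh⟩ := hM.symm.col_ex hlt
      exact absurd (hall i j hi) hh.ne
  · exact hall i j hi

theorem eqv_dom (C : Set (Minor2 m n)) (hC : ∀ δ ∈ C, δ.a1 = 0 ∧ δ.b1 = 0)
    (V : Fin m × Fin n → ℕ) (hV : SupC C V) :
    ∀ (k : ℕ) (U : Fin m × Fin n → ℕ), dst U V = k → SupC C U → Marg U V →
      (∀ i j, i ≠ 0 → j ≠ 0 → U (i, j) ≤ V (i, j)) → Eqv K C U V := by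
  intro k
  induction k using Nat.strong_induction_on with
  | _ k ih =>
    intro U hk hU hM hle
    by_cases hex : ∃ a b, a ≠ 0 ∧ b ≠ 0 ∧ U (a, b) < V (a, b)
    · obtain ⟨a, b, ha, hb, hlt⟩ := hex
      have hG : cg C a b := hV a b ha hb (by omega)
      obtain ⟨j, hj, hj2⟩ := hM.row_ex hlt
      obtain ⟨i, hi, hi2⟩ := hM.col_ex hlt
      have hj0 : j = 0 := by
        by_contra hj0
        exact absurd (hle a j ha hj0) (not_le.2 hj2)
      have hi0 : i = 0 := by
        by_contra hi0
        exact absurd (hle i b hi0 hb) (not_le.2 hi2)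
      subst hj0 hi0
      obtain ⟨e, f, g⟩ := add_basic (K := K) C hC hG U hU (by omega) (by omega)
      refine e.trans (ih _ (hk ▸ dst_add a b ha hb hlt) _ rfl g (f.symm.trans hM) ?_)
      intro i j hi hj
      have := hle i j hi hj
      simp only [addE, Prod.mk.injEq]
      grind
    · push Not at hex
      rw [eq_of_interior hM fun i j hi hj => le_antisymm (hle i j hi hj) (hex i j hi hj)]
      exact Eqv.refl _

/-- sliding an edge `(a₂,b)` to `(a,b)` or `(a,b₂)` to `(a,b)` -/
theorem slide (C : Set (Minor2 m n)) (hC : ∀ δ ∈ C, δ.a1 = 0 ∧ δ.b1 = 0)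
    {a c : Fin m} {b d : Fin n} (hab : cg C a b) (hcd : cg C c d) (hne : ¬ (a = c ∧ b = d))
    (U V : Fin m × Fin n → ℕ)
    (hU : SupC C U) (hM : Marg U V) (h0 : 1 ≤ U (0, 0)) (hlt : U (a, b) < V (a, b))
    (hgt : V (c, d) < U (c, d)) (hz : 1 ≤ U (a, 0) ∨ a = c) (hy : 1 ≤ U (0, b) ∨ b = d) :
    ∃ U', Eqv K C U U' ∧ Marg U' V ∧ SupC C U' ∧ dst U' V < dst U V ∧ U' (0, 0) = U (0, 0) := by
  obtain ⟨ha, hb⟩ := cg_ne C hC hab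
  obtain ⟨hc, hd⟩ := cg_ne C hC hcd
  obtain ⟨e, f, g⟩ := rem_basic (K := K) C hC hcd U hU h0 (by omega)
  have hy' : 1 ≤ remE U c d (0, b) := by
    simp only [remE, Prod.mk.injEq]; grind
  have hz' : 1 ≤ remE U c d (a, 0) := by
    simp only [remE, Prod.mk.injEq]; grind
  have hw : remE U c d (a, b) < V (a, b) := by
    simp only [remE, Prod.mk.injEq]; grind
  obtain ⟨e2, f2, g2⟩ := add_basic (K := K) C hC hab _ g hy' hz'
  refine ⟨_, e.trans e2, f2.symm.trans (f.symm.trans hM), g2,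
    (dst_add a b ha hb hw).trans (dst_rem c d hc hd hgt), ?_⟩
  simp [addE, remE]; omega

/-- General case: `t ≥ 1` in `U` and `t ≥ 2` in `V`. -/
theorem eqv_gen (C : Set (Minor2 m n)) (hC : ∀ δ ∈ C, δ.a1 = 0 ∧ δ.b1 = 0)
    (V : Fin m × Fin n → ℕ) (hV : SupC C V) (hV2 : 2 ≤ V (0, 0)) :
    ∀ (k : ℕ) (U : Fin m × Fin n → ℕ), dst U V = k → SupC C U → Marg U V →
      1 ≤ U (0, 0) → Eqv K C U V := by
  intro k
  induction k using Nat.strong_induction_on with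
  | _ k ih =>
    intro U hk hU hM h0
    by_cases hlt : U (0, 0) < V (0, 0)
    · obtain ⟨a, ha, haa⟩ := hM.col_ex hlt
      obtain ⟨b, hb, hbb⟩ := hM.symm.row_ex haa
      have hG : cg C a b := hV a b ha hb (by omega)
      by_cases hy : 1 ≤ U (0, b)
      · obtain ⟨e, f, g⟩ := add_basic (K := K) C hC hG U hU hy (by omega)
        refine e.trans (ih _ (hk ▸ dst_add a b ha hb hbb) _ rfl g (f.symm.trans hM) ?_)
        simp [addE]
      · obtain ⟨c, hc, hcc⟩ := hM.col_ex hbb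
        have hc0 : c ≠ 0 := by rintro rfl; omega
        have hG2 : cg C c b := hU c b hc0 hb (by omega)
        obtain ⟨U', e, f, g, l, h⟩ := slide (K := K) C hC hG hG2 (fun h => hc h.1.symm) U V hU hM
          h0 hbb hcc (Or.inl (by omega)) (Or.inr rfl)
        exact e.trans (ih _ (hk ▸ l) _ rfl g f (by omega))
    · by_cases hex : ∃ a b, a ≠ 0 ∧ b ≠ 0 ∧ V (a, b) < U (a, b)
      · obtain ⟨a, b, ha, hb, hab⟩ := hex
        obtain ⟨e, f, g⟩ := rem_basic (K := K) C hC (hU a b ha hb (by omega)) U hU h0 (by omega)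
        refine e.trans (ih _ (hk ▸ dst_rem a b ha hb hab) _ rfl g (f.symm.trans hM) ?_)
        simp [remE]; omega
      · push Not at hex
        exact eqv_dom C hC V hV _ U rfl hU hM hex

/-- star forests -/
def StarF (C : Set (Minor2 m n)) : Prop :=
  ∀ a b c d, cg C a b → cg C a d → cg C c b → b = d ∨ a = c

theorem eqv_star (C : Set (Minor2 m n)) (hC : ∀ δ ∈ C, δ.a1 = 0 ∧ δ.b1 = 0) (hS : StarF C)
    (V : Fin m × Fin n → ℕ) (hV : SupC C V) :
    ∀ (k : ℕ) (U : Fin m × Fin n → ℕ), dst U V = k → SupC C U → Marg U V →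
      1 ≤ U (0, 0) → Eqv K C U V := by
  intro k
  induction k using Nat.strong_induction_on with
  | _ k ih =>
    intro U hk hU hM h0
    by_cases hex : ∃ a b, a ≠ 0 ∧ b ≠ 0 ∧ U (a, b) < V (a, b)
    · obtain ⟨a, b, ha, hb, hab⟩ := hex
      have hG : cg C a b := hV a b ha hb (by omega)
      obtain ⟨j, hj, hj2⟩ := hM.row_ex hab
      obtain ⟨i, hi, hi2⟩ := hM.col_ex hab
      by_cases hj0 : j = 0
      · subst hj0
        by_cases hi0 : i = 0
        · subst hi0
          obtain ⟨e, f, g⟩ := add_basic (K := K) C hC hG U hU (by omega) (by omega)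
          refine e.trans (ih _ (hk ▸ dst_add a b ha hb hab) _ rfl g (f.symm.trans hM) ?_)
          simp [addE]
        · obtain ⟨U', e, f, g, l, h⟩ := slide (K := K) C hC hG (hU i b hi0 hb (by omega))
            (fun h => hi h.1.symm) U V hU hM h0 hab hi2 (Or.inl (by omega)) (Or.inr rfl)
          exact e.trans (ih _ (hk ▸ l) _ rfl g f (by omega))
      · have hGj : cg C a j := hU a j ha hj0 (by omega)
        have hi0 : i = 0 := by
          by_contra hi0
          rcases hS a b i j hG hGj (hU i b hi0 hb (by omega)) with h | h
          · exact hj h.symm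
          · exact hi h.symm
        subst hi0
        obtain ⟨U', e, f, g, l, h⟩ := slide (K := K) C hC hG hGj
            (fun h => hj h.2.symm) U V hU hM h0 hab hj2 (Or.inr rfl) (Or.inl (by omega))
        exact e.trans (ih _ (hk ▸ l) _ rfl g f (by omega))
    · push Not at hex
      exact (eqv_dom C hC U hU _ V rfl hV hM.symm hex).symm

/-- `Z` is a cover set: contains `(0,0)`, lies in the first row and column, covers the edges. -/
def IsCov (C : Set (Minor2 m n)) (Z : Set (Fin m × Fin n)) : Prop :=
  (0, 0) ∈ Z ∧ (∀ a b, a ≠ 0 → b ≠ 0 → (a, b) ∉ Z) ∧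
    ∀ a b, cg C a b → (a, 0) ∈ Z ∨ (0, b) ∈ Z

/-- cover sets that carry weight at least two by hypothesis -/
def Wit (C : Set (Minor2 m n)) (Z : Set (Fin m × Fin n)) : Prop :=
  (∃ a b d, cg C a b ∧ cg C a d ∧ b ≠ d ∧ (0, b) ∉ Z) ∨
  (∃ a c b, cg C a b ∧ cg C c b ∧ a ≠ c ∧ (a, 0) ∉ Z)

/-- the zero set of `U` together with `(0,0)` and `c` -/
def zset (U : Fin m × Fin n → ℕ) (c : Fin m × Fin n) : Set (Fin m × Fin n) :=
  {p | p = (0, 0) ∨ p = c ∨ ((p.1 = 0 ∨ p.2 = 0) ∧ U p = 0)}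

theorem zset_sum (U : Fin m × Fin n → ℕ) (c : Fin m × Fin n) (Z : Set (Fin m × Fin n))
    (hZ : Z ⊆ zset U c) :
    ∑ p ∈ (Set.toFinite Z).toFinset, U p ≤ U (0, 0) + (if c = (0, 0) then 0 else U c) := by
  classical
  have hsub : ∑ p ∈ (Set.toFinite Z).toFinset, U p ≤ ∑ p ∈ ({(0, 0), c} : Finset _), U p := by
    have h1 : ∑ p ∈ (Set.toFinite Z).toFinset, U p =
        ∑ p ∈ (Set.toFinite Z).toFinset.filter (fun p => U p ≠ 0), U p := by
      rw [Finset.sum_filter_ne_zero]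
    rw [h1]
    apply Finset.sum_le_sum_of_subset
    intro p hp
    simp only [Finset.mem_filter, Set.Finite.mem_toFinset] at hp
    rcases hZ hp.1 with h | h | h
    · simp [h]
    · simp [h]
    · exact absurd h.2 hp.2
  by_cases hc : c = (0, 0)
  · subst hc; simpa using hsub
  · rw [if_neg hc]
    rwa [Finset.sum_pair (Ne.symm hc)] at hsub

theorem nonstar_ge (C : Set (Minor2 m n)) (hC : ∀ δ ∈ C, δ.a1 = 0 ∧ δ.b1 = 0) (hS : ¬ StarF C)
    (U : Fin m × Fin n → ℕ)
    (hw : ∀ Z, IsCov C Z → Wit C Z → 2 ≤ ∑ p ∈ (Set.toFinite Z).toFinset, U p)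
    (Z : Set (Fin m × Fin n)) (hZ : IsCov C Z) : 2 ≤ ∑ p ∈ (Set.toFinite Z).toFinset, U p := by
  by_cases hWit : Wit C Z
  · exact hw Z hZ hWit
  unfold StarF at hS
  push Not at hS
  obtain ⟨a, b, c, d, hab, had, hcb, hbd, hac⟩ := hS
  obtain ⟨ha0, hb0⟩ := cg_ne C hC hab
  have hnb : ∀ i, cg C i b → (i, 0) ∈ Z := by
    intro i hi
    by_contra hiZ
    apply hWit
    right
    by_cases hia : i = a
    · exact ⟨i, c, b, hi, hcb, by rwa [hia], hiZ⟩
    · exact ⟨i, a, b, hi, hab, hia, hiZ⟩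
  have h2 := hw (Z \ {(0, b)}) ⟨⟨hZ.1, by simp [hb0.symm]⟩, fun i j hi hj h => hZ.2.1 i j hi hj h.1, ?_⟩
    (Or.inl ⟨a, b, d, hab, had, hbd, fun h => h.2 rfl⟩)
  · refine h2.trans (Finset.sum_le_sum_of_subset ?_)
    intro p hp
    simp only [Set.Finite.mem_toFinset] at hp ⊢
    exact hp.1
  · intro i j hij
    have hi0 := (cg_ne C hC hij).1
    by_cases hjb : j = b
    · left
      subst hjb
      exact ⟨hnb i hij, by simp [hi0]⟩
    · rcases hZ.2.2 i j hij with h | h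
      · left; exact ⟨h, by simp [hi0]⟩
      · right; exact ⟨h, by simp [hjb]⟩

theorem zset_cov (C : Set (Minor2 m n)) (U : Fin m × Fin n → ℕ) (c : Fin m × Fin n)
    (hc : c.1 = 0 ∨ c.2 = 0)
    (h : ∀ a b, cg C a b → 1 ≤ U (0, b) → 1 ≤ U (a, 0) → c = (a, 0) ∨ c = (0, b)) :
    IsCov C (zset U c) := by
  refine ⟨Or.inl rfl, ?_, ?_⟩
  · rintro a b ha hb (h | h | h)
    · exact ha (congrArg Prod.fst h)
    · subst h; simp [ha, hb] at hc
    · simp [ha, hb] at h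
  · intro a b hab
    by_cases h1 : U (0, b) = 0
    · right; exact Or.inr (Or.inr ⟨Or.inl rfl, h1⟩)
    by_cases h2 : U (a, 0) = 0
    · left; exact Or.inr (Or.inr ⟨Or.inr rfl, h2⟩)
    rcases h a b hab (by omega) (by omega) with h | h
    · left; exact Or.inr (Or.inl h.symm)
    · right; exact Or.inr (Or.inl h.symm)

theorem add_two (C : Set (Minor2 m n)) (hC : ∀ δ ∈ C, δ.a1 = 0 ∧ δ.b1 = 0)
    (U : Fin m × Fin n → ℕ) (hU : SupC C U) {a c : Fin m} {b d : Fin n}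
    (hab : cg C a b) (hcd : cg C c d) (h1 : 1 ≤ U (0, b)) (h2 : 1 ≤ U (a, 0))
    (h3 : 1 ≤ U (0, d)) (h4 : 1 ≤ U (c, 0)) (h5 : b = d → 2 ≤ U (0, b))
    (h6 : a = c → 2 ≤ U (a, 0)) :
    ∃ U', Eqv K C U U' ∧ Marg U U' ∧ SupC C U' ∧ 2 ≤ U' (0, 0) := by
  obtain ⟨ha, hb⟩ := cg_ne C hC hab
  obtain ⟨hc, hd⟩ := cg_ne C hC hcd
  obtain ⟨e, f, g⟩ := add_basic (K := K) C hC hab U hU h1 h2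
  obtain ⟨e2, f2, g2⟩ := add_basic (K := K) C hC hcd _ g
    (by simp only [addE, Prod.mk.injEq]; grind) (by simp only [addE, Prod.mk.injEq]; grind)
  exact ⟨_, e.trans e2, f.trans f2, g2, by simp [addE]⟩

theorem reach_two (C : Set (Minor2 m n)) (hC : ∀ δ ∈ C, δ.a1 = 0 ∧ δ.b1 = 0)
    (U : Fin m × Fin n → ℕ) (hU : SupC C U)
    (hw : ∀ Z, IsCov C Z → 2 ≤ ∑ p ∈ (Set.toFinite Z).toFinset, U p) :
    ∃ U', Eqv K C U U' ∧ Marg U U' ∧ SupC C U' ∧ 2 ≤ U' (0, 0) := by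
  by_cases h2 : 2 ≤ U (0, 0)
  · exact ⟨U, Eqv.refl _, ⟨fun _ => rfl, fun _ => rfl⟩, hU, h2⟩
  by_cases hex : ∃ a b, cg C a b ∧ 1 ≤ U (0, b) ∧ 1 ≤ U (a, 0)
  swap
  · exfalso
    push Not at hex
    have h3 := hw _ (zset_cov C U (0, 0) (Or.inl rfl) fun a b h h1 h2 =>
      absurd (hex a b h h1) (by omega))
    have h4 := zset_sum U (0, 0) _ (le_refl _)
    simp at h4
    omega
  obtain ⟨a, b, hab, hb1, ha1⟩ := hex
  obtain ⟨ha0, hb0⟩ := cg_ne C hC hab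
  by_cases h1 : U (0, 0) = 1
  · obtain ⟨e, f, g⟩ := add_basic (K := K) C hC hab U hU hb1 ha1
    exact ⟨_, e, f, g, by simp [addE]; omega⟩
  have key : ∀ c : Fin m × Fin n, (c.1 = 0 ∨ c.2 = 0) → U c = 1 →
      ∃ i j, cg C i j ∧ 1 ≤ U (0, j) ∧ 1 ≤ U (i, 0) ∧ c ≠ (i, 0) ∧ c ≠ (0, j) := by
    intro c hc hc1
    by_contra! hcon
    have h3 := hw _ (zset_cov C U c hc fun i j h h1 h2 => by
      by_cases h' : c = (i, 0)
      · exact Or.inl h'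
      · exact Or.inr (hcon i j h h1 h2 h'))
    have h4 := zset_sum U c _ (le_refl _)
    split_ifs at h4 <;> omega
  have hA : 2 ≤ U (a, 0) ∨ ∃ i j, cg C i j ∧ 1 ≤ U (0, j) ∧ 1 ≤ U (i, 0) ∧ a ≠ i := by
    by_cases h : 2 ≤ U (a, 0)
    · exact Or.inl h
    · obtain ⟨i, j, h1, h2, h3, h4, -⟩ := key (a, 0) (Or.inr rfl) (by omega)
      exact Or.inr ⟨i, j, h1, h2, h3, fun h => h4 (by rw [h])⟩
  have hB : 2 ≤ U (0, b) ∨ ∃ i j, cg C i j ∧ 1 ≤ U (0, j) ∧ 1 ≤ U (i, 0) ∧ b ≠ j := by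
    by_cases h : 2 ≤ U (0, b)
    · exact Or.inl h
    · obtain ⟨i, j, h1, h2, h3, -, h4⟩ := key (0, b) (Or.inl rfl) (by omega)
      exact Or.inr ⟨i, j, h1, h2, h3, fun h => h4 (by rw [h])⟩
  rcases hA with hA | ⟨i, j, hij, hj1, hi1, hai⟩
  · rcases hB with hB | ⟨i', j', hij', hj1', hi1', hbj⟩
    · exact add_two C hC U hU hab hab hb1 ha1 hb1 ha1 (fun _ => hB) (fun _ => hA)
    · exact add_two C hC U hU hab hij' hb1 ha1 hj1' hi1' (fun h => absurd h hbj) (fun _ => hA)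
  · rcases hB with hB | ⟨i', j', hij', hj1', hi1', hbj⟩
    · exact add_two C hC U hU hab hij hb1 ha1 hj1 hi1 (fun _ => hB) (fun h => absurd h hai)
    · by_cases hbj2 : b = j
      · by_cases hai2 : a = i'
        · subst hbj2 hai2
          exact add_two C hC U hU hij hij' hj1 hi1 hj1' hi1' (fun h => absurd h hbj)
            (fun h => absurd h.symm hai)
        · exact add_two C hC U hU hab hij' hb1 ha1 hj1' hi1' (fun h => absurd h hbj)
            (fun h => absurd h hai2)
      · exact add_two C hC U hU hab hij hb1 ha1 hj1 hi1 (fun h => absurd h hbj2)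
          (fun h => absurd h hai)

theorem final_star (C : Set (Minor2 m n)) (hC : ∀ δ ∈ C, δ.a1 = 0 ∧ δ.b1 = 0) (hS : StarF C)
    (U V : Fin m × Fin n → ℕ) (hU : SupC C U) (hV : SupC C V) (hM : Marg U V)
    (hw : ∀ Z, IsCov C Z → Wit C Z → 2 ≤ ∑ p ∈ (Set.toFinite Z).toFinset, U p) :
    Eqv K C U V := by
  by_cases h0 : 1 ≤ U (0, 0)
  · exact eqv_star C hC hS V hV _ U rfl hU hM h0
  by_cases hex : ∃ a b, cg C a b ∧ 1 ≤ U (0, b) ∧ 1 ≤ U (a, 0)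
  · obtain ⟨a, b, hab, h1, h2⟩ := hex
    obtain ⟨e, f, g⟩ := add_basic (K := K) C hC hab U hU h1 h2
    exact e.trans (eqv_star C hC hS V hV _ _ rfl g (f.symm.trans hM) (by simp [addE]))
  push Not at hex
  have hZ : IsCov C (zset U (0, 0)) := zset_cov C U (0, 0) (Or.inl rfl) fun a b h h1 h2 =>
      absurd (hex a b h h1) (by omega)
  have hnW : ¬ Wit C (zset U (0, 0)) := by
    intro h
    have h3 := hw _ hZ h
    have h4 := zset_sum U (0, 0) _ (le_refl _)
    simp at h4
    omega
  refine (eqv_dom C hC U hU _ V rfl hV hM.symm ?_).symm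
  intro a b ha hb
  by_contra! hab
  have hG : cg C a b := hV a b ha hb (by omega)
  obtain ⟨j, hj, hj2⟩ := hM.row_ex hab
  obtain ⟨i, hi, hi2⟩ := hM.col_ex hab
  by_cases hj0 : j = 0
  · subst hj0
    by_cases hi0 : i = 0
    · subst hi0
      have := hex a b hG (by omega)
      omega
    · apply hnW
      refine Or.inr ⟨a, i, b, hG, hU i b hi0 hb (by omega), hi.symm, ?_⟩
      rintro (h | h | h)
      · simp [ha] at h
      · simp [ha] at h
      · have := h.2; omega
  · have hGj : cg C a j := hU a j ha hj0 (by omega)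
    have hi0 : i = 0 := by
      by_contra hi0
      rcases hS a b i j hG hGj (hU i b hi0 hb (by omega)) with h | h
      · exact hj h.symm
      · exact hi h.symm
    subst hi0
    apply hnW
    refine Or.inl ⟨a, b, j, hG, hGj, hj.symm, ?_⟩
    rintro (h | h | h)
    · simp [hb] at h
    · simp [hb] at h
    · have := h.2; omega

theorem final_all (C : Set (Minor2 m n)) (hC : ∀ δ ∈ C, δ.a1 = 0 ∧ δ.b1 = 0)
    (U V : Fin m × Fin n → ℕ) (hU : SupC C U) (hV : SupC C V) (hM : Marg U V)
    (hwU : ∀ Z, IsCov C Z → Wit C Z → 2 ≤ ∑ p ∈ (Set.toFinite Z).toFinset, U p)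
    (hwV : ∀ Z, IsCov C Z → Wit C Z → 2 ≤ ∑ p ∈ (Set.toFinite Z).toFinset, V p) :
    Eqv K C U V := by
  by_cases hS : StarF C
  · exact final_star C hC hS U V hU hV hM hwU
  · obtain ⟨U', e, f, g, h⟩ := reach_two (K := K) C hC U hU (nonstar_ge C hC hS U hwU)
    obtain ⟨V', e', f', g', h'⟩ := reach_two (K := K) C hC V hV (nonstar_ge C hC hS V hwV)
    exact (e.trans (eqv_gen C hC V' g' h' _ U' rfl g (f.symm.trans (hM.trans f'))
      (by omega))).trans e'.symm

end Comb

theorem statement15 (K : Type*) [Field K] (m n : ℕ) [NeZero m] [NeZero n]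
    (C : Set (Minor2 m n)) (hC : ∀ δ ∈ C, δ.a1 = 0 ∧ δ.b1 = 0)
    (U V' : Fin m × Fin n → ℕ)
    (hUsupp : ∀ p, p ∉ vertexSetOf C → U p = 0)
    (hVsupp : ∀ p, p ∉ vertexSetOf C → V' p = 0)
    (h1 : ∀ W : Set (Fin m × Fin n), Admissible C W →
      PW K C W ∈ (minorIdeal K C).minimalPrimes → W ≠ ∅ →
        2 ≤ ∑ p ∈ (Set.toFinite W).toFinset, U p ∧
        2 ≤ ∑ p ∈ (Set.toFinite W).toFinset, V' p)
    (hrow : ∀ i : Fin m, ∑ j : Fin n, U (i, j) = ∑ j : Fin n, V' (i, j))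
    (hcol : ∀ j : Fin n, ∑ i : Fin m, U (i, j) = ∑ i : Fin m, V' (i, j))
    (hcyc : ∃ σ : CycleIn C, ∀ p, (U p ≠ 0 ∨ V' p ≠ 0) →
      (∃ k, hClass C p = hClass C (σ.p k)) ∧ (∃ k, vClass C p = vClass C (σ.p k))) :
    (∏ p : Fin m × Fin n, (X p : MvPolynomial (Fin m × Fin n) K) ^ U p) -
      (∏ p : Fin m × Fin n, (X p : MvPolynomial (Fin m × Fin n) K) ^ V' p) ∈
      minorIdeal K C := by
  have hsup : ∀ T : Fin m × Fin n → ℕ, (∀ p, p ∉ vertexSetOf C → T p = 0) → SupC C T := by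
    intro T hT a b ha hb hab
    by_contra hG
    apply hab
    apply hT
    intro hmem
    simp only [vertexSetOf, Set.mem_iUnion] at hmem
    obtain ⟨δ, hδ, hv⟩ := hmem
    simp only [Minor2.vertexSet, (hC δ hδ).1, (hC δ hδ).2, Set.mem_insert_iff,
      Set.mem_singleton_iff, Prod.mk.injEq, ha, hb, false_and, and_false, false_or] at hv
    exact hG ⟨δ, hδ, hv.1.symm, hv.2.symm⟩
  have hW : ∀ Z, IsCov C Z → Wit C Z →
      ∃ W ⊆ Z, Admissible C W ∧ PW K C W ∈ (minorIdeal K C).minimalPrimes ∧ W ≠ ∅ := by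
    rintro Z ⟨h00, hint, hcov⟩ (⟨a, b, d, hab, had, hbd, hb⟩ | ⟨a, c, b, hab, hcb, hac, ha⟩)
    · exact exists_W_row K C hC Z h00 hint hcov a b d hab had hbd hb
    · exact exists_W_col K C hC Z h00 hint hcov a c b hab hcb hac ha
  have hsub : ∀ (T : Fin m × Fin n → ℕ) (W Z : Set (Fin m × Fin n)), W ⊆ Z →
      ∑ p ∈ (Set.toFinite W).toFinset, T p ≤ ∑ p ∈ (Set.toFinite Z).toFinset, T p := by
    intro T W Z h
    apply Finset.sum_le_sum_of_subset
    intro p hp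
    simp only [Set.Finite.mem_toFinset] at hp ⊢
    exact h hp
  refine final_all (K := K) C hC U V' (hsup U hUsupp) (hsup V' hVsupp) ⟨hrow, hcol⟩ ?_ ?_
  · intro Z hZ hwit
    obtain ⟨W, hWZ, hA, hP, hne⟩ := hW Z hZ hwit
    exact (h1 W hA hP hne).1.trans (hsub U W Z hWZ)
  · intro Z hZ hwit
    obtain ⟨W, hWZ, hA, hP, hne⟩ := hW Z hZ hwit
    exact (h1 W hA hP hne).2.trans (hsub V' W Z hWZ)
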